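/- Let q be a prime power and A = ((a,b),(c,d)) an invertible 2×2 matrix over F_{q^2}. If a·c^q ∈ F_q, b·d^q ∈ F_q, and a^q·d − b·c^q = a·d^q − b^q·c, then A^q = (Φ/Δ)·A where Φ = a^q·d − b·c^q and Δ = ad − bc; consequently some nonzero scalar multiple of A has all entries in F_q. -/

import Mathlib

/-- If `x ↦ x ^ q` acts as multiplication by `t` on both `x ≠ 0` and `y`, then `y / x` is fixed
by it. -/
theorem inv_mul_pow_eq_self_of_pow_eq_mul {K : Type*} [Field K] {q : ℕ} {t x y : K} (hx : x ≠ 0)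
    (hxt : x ^ q = t * x) (hyt : y ^ q = t * y) : (x⁻¹ * y) ^ q = x⁻¹ * y := by
  have ht : t ≠ 0 := by
    rintro rfl
    exact pow_ne_zero q hx (by simpa using hxt)
  rw [mul_pow, inv_pow, hxt, hyt]
  field_simp

/-- Let `q` be a prime power and `A = !![a,b;c,d]` an invertible
matrix over `F_{q²}` (a field `K` with `q²` elements; the subfield `F_q` is the set of
fixed points of `x ↦ x^q`).  If `a c^q ∈ F_q`, `b d^q ∈ F_q` and
`a^q d − b c^q = a d^q − b^q c`, then `A^q = (Φ/Δ) • A` (entrywise `q`-th power), where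
`Φ = a^q d − b c^q` and `Δ = ad − bc`; consequently some nonzero scalar multiple of `A`
has all entries in `F_q`. -/
theorem frobenius_scalar_multiple
    (q : ℕ) (hq : ∃ p n : ℕ, p.Prime ∧ 0 < n ∧ q = p ^ n)
    (K : Type*) [Field K] [Fintype K] (hK : Fintype.card K = q ^ 2)
    (a b c d : K) (hdet : a * d - b * c ≠ 0)
    (h1 : (a * c ^ q) ^ q = a * c ^ q)
    (h2 : (b * d ^ q) ^ q = b * d ^ q)
    (h3 : a ^ q * d - b * c ^ q = a * d ^ q - b ^ q * c) :
    (a ^ q = (a ^ q * d - b * c ^ q) / (a * d - b * c) * a ∧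
     b ^ q = (a ^ q * d - b * c ^ q) / (a * d - b * c) * b ∧
     c ^ q = (a ^ q * d - b * c ^ q) / (a * d - b * c) * c ∧
     d ^ q = (a ^ q * d - b * c ^ q) / (a * d - b * c) * d) ∧
    ∃ l : K, l ≠ 0 ∧ (l * a) ^ q = l * a ∧ (l * b) ^ q = l * b ∧
      (l * c) ^ q = l * c ∧ (l * d) ^ q = l * d := by
  have hfrob (x : K) : (x ^ q) ^ q = x := by
    rw [← pow_mul, ← sq, ← hK, FiniteField.pow_card]
  rw [mul_pow, hfrob] at h1 h2
  have ha : a ^ q = (a ^ q * d - b * c ^ q) / (a * d - b * c) * a := by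
    rw [div_mul_eq_mul_div, eq_div_iff hdet]
    linear_combination -b * h1
  have hb : b ^ q = (a ^ q * d - b * c ^ q) / (a * d - b * c) * b := by
    rw [div_mul_eq_mul_div, eq_div_iff hdet]
    linear_combination a * h2 - b * h3
  have hc : c ^ q = (a ^ q * d - b * c ^ q) / (a * d - b * c) * c := by
    rw [div_mul_eq_mul_div, eq_div_iff hdet]
    linear_combination -d * h1
  have hd : d ^ q = (a ^ q * d - b * c ^ q) / (a * d - b * c) * d := by
    rw [div_mul_eq_mul_div, eq_div_iff hdet]
    linear_combination c * h2 - d * h3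
  have key (x : K) (hx : x ≠ 0)
      (hxt : x ^ q = (a ^ q * d - b * c ^ q) / (a * d - b * c) * x) :
      ∃ l : K, l ≠ 0 ∧ (l * a) ^ q = l * a ∧ (l * b) ^ q = l * b ∧
        (l * c) ^ q = l * c ∧ (l * d) ^ q = l * d :=
    ⟨x⁻¹, inv_ne_zero hx, inv_mul_pow_eq_self_of_pow_eq_mul hx hxt ha,
      inv_mul_pow_eq_self_of_pow_eq_mul hx hxt hb, inv_mul_pow_eq_self_of_pow_eq_mul hx hxt hc,
      inv_mul_pow_eq_self_of_pow_eq_mul hx hxt hd⟩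
  refine ⟨⟨ha, hb, hc, hd⟩, ?_⟩
  by_cases ha0 : a = 0
  · exact key b (fun hb0 => hdet (by rw [ha0, hb0]; ring)) hb
  · exact key a ha0 ha
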